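/- arXiv:1312.2097 — 11 statements merged into one kernel-verified Lean document; each statement's English description precedes it below -/
import Mathlib

section
/- Let k be an algebraically closed field of characteristic zero, n ≥ 1, and ζ ∈ k a primitive n-th root of unity. Let ω : (ZMod n)³ → kˣ be any map satisfying the 3-cocycle identity ω(b,c,d) · ω(a, b+c, d) · ω(a,b,c) = ω(a, b, c+d) · ω(a+b, c, d) for all a,b,c,d ∈ ZMod n, and normalized in the sense that ω(a,b,c) = 1 whenever a = 0, b = 0 or c = 0. Then there exist i ∈ {0, …, n−1} and a map α : (ZMod n)² → kˣ with α(0,b) = α(a,0) = 1 for all a,b, such that for all a,b,c ∈ ZMod n: ω(a,b,c) = ζ^{i · val(a) · [val(b) + val(c) ≥ n]} · α(b,c) · α(a+b, c)⁻¹ · α(a, b+c) · α(a,b)⁻¹. -/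
/-!
Given a normalized 3-cocycle `ω` and an element `g`, put `A(a, j) = ∏_{t < j} ω(a, t g, g)`.
Multiplying the cocycle identity along the orbit of `g` in its last variable gives
`ω(a, b g, c g) · A(a, b) · A(a + b g, c) = A(b g, c) · A(a, b + c)`.
So on `ZMod n`, with `g = 1`, `ω` would be the coboundary of `(a, b) ↦ A(a, val b)` if `val` were
additive. The correction for a carry in `val b + val c` is `A(a, n)`, and taking `c = n` in the
identity shows that `a ↦ A(a, n)` is multiplicative; hence `A(a, n) = u ^ val a` with
`u = A(1, n)` and `u ^ n = 1`.
-/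

section

variable {G M : Type*}

/-- The 3-cocycle identity for a map with values in an abelian group `M` with trivial action,
written multiplicatively and arranged so that no inverses occur. -/
def IsThreeCocycle [Add G] [Mul M] (ω : G → G → G → M) : Prop :=
  ∀ a b c d, ω b c d * ω a (b + c) d * ω a b c = ω a b (c + d) * ω (a + b) c d

/-- The coboundary `∂²α` of a 2-cochain with values in a group with trivial action. -/
def coboundaryTwo [Add G] [Group M] (α : G → G → M) (a b c : G) : M :=
  α b c * (α (a + b) c)⁻¹ * α a (b + c) * (α a b)⁻¹

/-- The standard 3-cochain `ω_u` on `ZMod n`, a 3-cocycle when `u ^ n = 1`. The `if` is the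
carry in the sum of the representatives of `b` and `c`. -/
def standardThreeCocycle {n : ℕ} [Monoid M] (u : M) (a b c : ZMod n) : M :=
  u ^ (a.val * if n ≤ b.val + c.val then 1 else 0)

/-- The product of `ω a x g` over the first `j` points `x = 0, g, 2 • g, …` of the orbit of `g`.
For a normalized 3-cocycle on `ZMod n` and `g = 1` it provides the 2-cochain that trivializes `ω`
up to a standard cocycle. -/
def orbitProd [AddMonoid G] [CommMonoid M] (ω : G → G → G → M) (g a : G) (j : ℕ) : M :=
  ∏ t ∈ Finset.range j, ω a (t • g) g

section OrbitProd

variable [AddMonoid G] [CommMonoid M] (ω : G → G → G → M) (g a : G)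

@[simp]
lemma orbitProd_zero : orbitProd ω g a 0 = 1 :=
  Finset.prod_range_zero _

lemma orbitProd_succ (j : ℕ) : orbitProd ω g a (j + 1) = orbitProd ω g a j * ω a (j • g) g :=
  Finset.prod_range_succ _ _

variable {g} in
lemma orbitProd_add_period {n : ℕ} (hg : n • g = 0) (j : ℕ) :
    orbitProd ω g a (n + j) = orbitProd ω g a n * orbitProd ω g a j := by
  simp only [orbitProd, Finset.prod_range_add, add_nsmul, hg, zero_add]

end OrbitProd

namespace IsThreeCocycle

section CancelCommMonoid

variable [AddMonoid G] [CancelCommMonoid M] {ω : G → G → G → M}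

lemma map_zero_fst (hω : IsThreeCocycle ω) (hω₀ : ∀ a c, ω a 0 c = 1) (b c : G) :
    ω 0 b c = 1 := by
  simpa [hω₀] using hω 0 0 b c

lemma map_zero_trd (hω : IsThreeCocycle ω) (hω₀ : ∀ a c, ω a 0 c = 1) (a b : G) :
    ω a b 0 = 1 := by
  simpa [hω₀] using hω a b 0 0

lemma orbitProd_zero_left (hω : IsThreeCocycle ω) (hω₀ : ∀ a c, ω a 0 c = 1) (g : G) (j : ℕ) :
    orbitProd ω g 0 j = 1 :=
  Finset.prod_eq_one fun _ _ ↦ hω.map_zero_fst hω₀ _ _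

lemma mul_orbitProd_mul_orbitProd (hω : IsThreeCocycle ω) (hω₀ : ∀ a c, ω a 0 c = 1)
    (g a : G) (b c : ℕ) :
    ω a (b • g) (c • g) * (orbitProd ω g a b * orbitProd ω g (a + b • g) c) =
      orbitProd ω g (b • g) c * orbitProd ω g a (b + c) := by
  induction c with
  | zero => simp [hω.map_zero_trd hω₀]
  | succ c ih =>
    have hcoc := hω a (b • g) (c • g) g
    rw [← add_nsmul, ← succ_nsmul] at hcoc
    rw [← add_assoc, orbitProd_succ, orbitProd_succ, orbitProd_succ]
    calc ω a (b • g) ((c + 1) • g) *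
          (orbitProd ω g a b * (orbitProd ω g (a + b • g) c * ω (a + b • g) (c • g) g))
        = ω a (b • g) ((c + 1) • g) * ω (a + b • g) (c • g) g *
            (orbitProd ω g a b * orbitProd ω g (a + b • g) c) := by ac_rfl
      _ = ω (b • g) (c • g) g * ω a ((b + c) • g) g *
            (ω a (b • g) (c • g) * (orbitProd ω g a b * orbitProd ω g (a + b • g) c)) := by
          rw [← hcoc, mul_assoc]
      _ = orbitProd ω g (b • g) c * ω (b • g) (c • g) g *
            (orbitProd ω g a (b + c) * ω a ((b + c) • g) g) := by
          rw [ih]; ac_rfl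

section Period

variable {g : G} {n : ℕ}

lemma orbitProd_period_add (hω : IsThreeCocycle ω) (hω₀ : ∀ a c, ω a 0 c = 1) (hg : n • g = 0)
    (a : G) (b : ℕ) :
    orbitProd ω g (a + b • g) n = orbitProd ω g a n * orbitProd ω g (b • g) n := by
  have h := hω.mul_orbitProd_mul_orbitProd hω₀ g a b n
  rw [hg, hω.map_zero_trd hω₀, one_mul, add_comm b, orbitProd_add_period ω a hg] at h
  apply mul_left_cancel (a := orbitProd ω g a b)
  rw [h]
  ac_rfl

lemma orbitProd_period_nsmul (hω : IsThreeCocycle ω) (hω₀ : ∀ a c, ω a 0 c = 1)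
    (hg : n • g = 0) (m : ℕ) : orbitProd ω g (m • g) n = orbitProd ω g g n ^ m := by
  induction m with
  | zero => simp [hω.orbitProd_zero_left hω₀]
  | succ m ih =>
    have hadd := hω.orbitProd_period_add hω₀ hg (m • g) 1
    rwa [one_nsmul, ← succ_nsmul, ih, ← pow_succ] at hadd

lemma orbitProd_period_pow_eq_one (hω : IsThreeCocycle ω) (hω₀ : ∀ a c, ω a 0 c = 1)
    (hg : n • g = 0) : orbitProd ω g g n ^ n = 1 := by
  rw [← hω.orbitProd_period_nsmul hω₀ hg, hg, hω.orbitProd_zero_left hω₀]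

end Period

end CancelCommMonoid

end IsThreeCocycle

lemma eq_mul_coboundaryTwo_iff [Add G] [CommGroup M] {α : G → G → M} {a b c : G} {x y : M} :
    x = y * coboundaryTwo α a b c ↔
      x * (α a b * α (a + b) c) = α b c * (α a (b + c) * y) := by
  have hcoboundary : y * coboundaryTwo α a b c =
      α b c * (α a (b + c) * y) * (α a b * α (a + b) c)⁻¹ := by
    rw [coboundaryTwo, mul_inv]
    ac_rfl
  rw [hcoboundary, eq_mul_inv_iff_mul_eq]

namespace IsThreeCocycle

variable {n : ℕ} [NeZero n]

lemma orbitProd_val_add_val [CancelCommMonoid M] {ω : ZMod n → ZMod n → ZMod n → M}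
    (hω : IsThreeCocycle ω) (hω₀ : ∀ a c, ω a 0 c = 1) (a b c : ZMod n) :
    orbitProd ω 1 a (b.val + c.val) =
      orbitProd ω 1 a (b + c).val * standardThreeCocycle (orbitProd ω 1 1 n) a b c := by
  have hperiod : n • (1 : ZMod n) = 0 := by simp
  rw [standardThreeCocycle]
  split_ifs with hcarry
  · have hpow := hω.orbitProd_period_nsmul hω₀ hperiod a.val
    rw [nsmul_one, ZMod.natCast_zmod_val] at hpow
    rw [ZMod.val_add_val_of_le hcarry, add_comm _ n, orbitProd_add_period ω a hperiod, hpow,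
      mul_one, mul_comm]
  · rw [ZMod.val_add_of_lt (not_le.mp hcarry), mul_zero, pow_zero, mul_one]

theorem exists_eq_standardThreeCocycle_mul_coboundaryTwo [CommGroup M]
    {ω : ZMod n → ZMod n → ZMod n → M}
    (hω : IsThreeCocycle ω) (hω₀ : ∀ a c, ω a 0 c = 1) :
    ∃ (u : M) (α : ZMod n → ZMod n → M), u ^ n = 1 ∧ (∀ b, α 0 b = 1) ∧ (∀ a, α a 0 = 1) ∧
      ∀ a b c, ω a b c = standardThreeCocycle u a b c * coboundaryTwo α a b c := by
  refine ⟨orbitProd ω 1 1 n, fun a b ↦ orbitProd ω 1 a b.val,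
    hω.orbitProd_period_pow_eq_one hω₀ (by simp), fun b ↦ hω.orbitProd_zero_left hω₀ 1 b.val,
    fun a ↦ by simp, fun a b c ↦ eq_mul_coboundaryTwo_iff.mpr ?_⟩
  rw [← hω.orbitProd_val_add_val hω₀]
  simpa using hω.mul_orbitProd_mul_orbitProd hω₀ 1 a b.val c.val

end IsThreeCocycle

end

theorem normalized_three_cocycle_eq_standard_mul_coboundary_general
    {R : Type*} [CommRing R] [IsDomain R] {n : ℕ} [NeZero n] {ζ : Rˣ} (hζ : IsPrimitiveRoot ζ n)
    {ω : ZMod n → ZMod n → ZMod n → Rˣ} (hω : IsThreeCocycle ω) (hω₀ : ∀ a c, ω a 0 c = 1) :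
    ∃ (i : ℕ) (α : ZMod n → ZMod n → Rˣ),
      i < n ∧ (∀ b, α 0 b = 1) ∧ (∀ a, α a 0 = 1) ∧
      ∀ a b c, ω a b c =
        ζ ^ (i * a.val * (if n ≤ b.val + c.val then 1 else 0)) * coboundaryTwo α a b c := by
  obtain ⟨u, α, hu, hα₀, hα₁, hωα⟩ := hω.exists_eq_standardThreeCocycle_mul_coboundaryTwo hω₀
  obtain ⟨i, hi, rfl⟩ := hζ.eq_pow_of_mem_rootsOfUnity ((mem_rootsOfUnity n u).mpr hu)
  refine ⟨i, α, hi, hα₀, hα₁, fun a b c ↦ ?_⟩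
  rw [hωα, standardThreeCocycle, ← pow_mul, mul_assoc i]

/-- Proposition 5.1 (pro:KCn): every normalized 3-cocycle on the cyclic group
`C_n = ZMod n` with values in `kˣ` equals a standard cocycle `ω_{ζ^i}` twisted by the
coboundary of a normalized 2-cochain `α`. -/
theorem normalized_three_cocycle_eq_standard_mul_coboundary
    {k : Type*} [Field k] [IsAlgClosed k] [CharZero k]
    (n : ℕ) (hn : 1 ≤ n) (ζ : kˣ) (hζ : IsPrimitiveRoot ζ n)
    (ω : ZMod n → ZMod n → ZMod n → kˣ)
    (hcoc : ∀ a b c d : ZMod n,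
      ω b c d * ω a (b + c) d * ω a b c = ω a b (c + d) * ω (a + b) c d)
    (hnorm : ∀ a b c : ZMod n, (a = 0 ∨ b = 0 ∨ c = 0) → ω a b c = 1) :
    ∃ (i : ℕ) (α : ZMod n → ZMod n → kˣ),
      i < n ∧
      (∀ b : ZMod n, α 0 b = 1) ∧ (∀ a : ZMod n, α a 0 = 1) ∧
      ∀ a b c : ZMod n,
        ω a b c =
          ζ ^ (i * a.val * (if n ≤ b.val + c.val then 1 else 0)) *
            (α b c * (α (a + b) c)⁻¹ * α a (b + c) * (α a b)⁻¹) := by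
  have : NeZero n := ⟨Nat.one_le_iff_ne_zero.mp hn⟩
  exact normalized_three_cocycle_eq_standard_mul_coboundary_general hζ hcoc (by simp [hnorm])
end

section
/- Let k be a field, G a group (written multiplicatively), g ∈ G, ω : G × G × G → kˣ, and χ : G → k with χ(1) = 1. Assume the quasi-YD product formula: χ(h·l) = ω(h,l,g)⁻¹ · χ(l) · ω(h,g,l) · χ(h) · ω(g,h,l)⁻¹ for all h, l ∈ G. Assume moreover that for every h ∈ G, either χ(h) = 0 or g·h = h·g. Then: (a) χ(h) ≠ 0 for every h ∈ G, and (b) g lies in the center of G. -/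
/-!
Since the twists are units, the product formula at `(h, h⁻¹)` and at `(h⁻¹, h)` shows that `χ h` has
a left and a right inverse. So `χ h` is a unit; in particular it never vanishes, and the
compatibility condition then forces `g` to commute with every `h`.
-/

theorem isUnit_of_isUnit_mul_of_isUnit_mul {M : Type*} [Monoid M] {x y z : M}
    (hxy : IsUnit (x * y)) (hzx : IsUnit (z * x)) : IsUnit x := by
  obtain ⟨r, hr⟩ := hxy.exists_right_inv
  obtain ⟨l, hl⟩ := hzx.exists_left_inv
  exact isUnit_iff_exists_and_exists.mpr
    ⟨⟨y * r, by rw [← mul_assoc, hr]⟩, ⟨l * z, by rw [mul_assoc, hl]⟩⟩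

theorem isUnit_apply_of_twisted_map_mul {G M : Type*} [Group G] [Monoid M] {χ : G → M}
    {a b c : G → G → Mˣ} (hχ1 : IsUnit (χ 1))
    (hmul : ∀ h l : G, χ (h * l) = a h l * χ l * b h l * χ h * c h l) (h : G) :
    IsUnit (χ h) := by
  have isUnit_twisted_product {x y : G} (hxy : x * y = 1) :
      IsUnit (χ y * (b x y * χ x)) := by
    rw [← (a x y).isUnit_units_mul, ← Units.isUnit_mul_units _ (c x y)]
    simpa only [← hxy, hmul, mul_assoc] using hχ1
  have isUnit_mul_left : IsUnit (χ h * (b h⁻¹ h * χ h⁻¹)) :=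
    isUnit_twisted_product (inv_mul_cancel h)
  have isUnit_mul_right : IsUnit (χ h⁻¹ * b h h⁻¹ * χ h) := by
    simpa only [mul_assoc] using isUnit_twisted_product (mul_inv_cancel h)
  exact isUnit_of_isUnit_mul_of_isUnit_mul isUnit_mul_left isUnit_mul_right

theorem quasiYD_group_datum_central_general {k : Type*} [MonoidWithZero k] [Nontrivial k]
    {G : Type*} [Group G] (g : G) (ω : G → G → G → kˣ) (χ : G → k) (hχ1 : IsUnit (χ 1))
    (hprod : ∀ h l : G, χ (h * l) =
      ((ω h l g)⁻¹ : kˣ) * χ l * ω h g l * χ h * ((ω g h l)⁻¹ : kˣ))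
    (hcomm : ∀ h : G, χ h = 0 ∨ g * h = h * g) :
    (∀ h : G, IsUnit (χ h)) ∧ (∀ h : G, g * h = h * g) := by
  have isUnit_apply : ∀ h, IsUnit (χ h) := isUnit_apply_of_twisted_map_mul hχ1 hprod
  exact ⟨isUnit_apply, fun h => (hcomm h).resolve_left (isUnit_apply h).ne_zero⟩

/-- Lemma 3.6 (lem:group): a quasi-Yetter–Drinfeld datum on a group algebra `kG`
forces `χ` to be nowhere zero and `g` to be central. -/
theorem quasiYD_group_datum_central {k : Type*} [Field k] {G : Type*} [Group G]
    (g : G) (ω : G → G → G → kˣ) (χ : G → k) (hχ1 : χ 1 = 1)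
    (hprod : ∀ h l : G, χ (h * l) =
      ((ω h l g : k))⁻¹ * χ l * (ω h g l : k) * χ h * ((ω g h l : k))⁻¹)
    (hcomm : ∀ h : G, χ h = 0 ∨ g * h = h * g) :
    (∀ h : G, χ h ≠ 0) ∧ (∀ h : G, g * h = h * g) := by
  simpa only [isUnit_iff_ne_zero] using quasiYD_group_datum_central_general g ω χ
    (hχ1 ▸ isUnit_one) (by simpa only [Units.val_inv_eq_inv_val] using hprod) hcomm
end

section
/- Let k be a field, G a group (written multiplicatively), g, c ∈ G, ω : G × G × G → kˣ, and χ : G → k with χ(1) = 1, satisfying the quasi-YD product formula: χ(h·l) = ω(h,l,g)⁻¹ · χ(l) · ω(h,g,l) · χ(h) · ω(g,h,l)⁻¹ for all h, l ∈ G. Then for every integer t ≥ 1: χ(c^t) = χ(c)^t · ∏_{i=0}^{t−1} [ ω(c^i, c, g)⁻¹ · ω(c^i, g, c) · ω(g, c^i, c)⁻¹ ]. In particular, taking c = g: χ(g^t) = χ(g)^t · ∏_{i=0}^{t−1} ω(g, g^i, g)⁻¹. -/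
/-!
Commutativity turns the quasi-YD product formula into `χ (h * l) = σ h l * (χ h * χ l)`, where `σ`
is the inverse of the slant product of `ω` with `g`: `χ` is multiplicative up to the 2-cochain `σ`.
Multiplying by `c` once more thus contributes a factor `σ (c ^ i) c * χ c`, and these factors
accumulate along the powers of `c`. For `c = g` two of the three factors of `σ (g ^ i) g` cancel.
-/

/-- The inverse of the slant product (transgression) of a 3-cochain `ω` with `g`, under the
convention `ω g h l * (ω h g l)⁻¹ * ω h l g` for the slant product. It measures the deviation
of `χ` from multiplicativity in a quasi-Yetter–Drinfeld datum. -/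
def invSlantProduct {G A : Type*} [Group A] (ω : G → G → G → A) (g h l : G) : A :=
  (ω h l g)⁻¹ * ω h g l * (ω g h l)⁻¹

theorem invSlantProduct_self_right {G A : Type*} [Group A] (ω : G → G → G → A) (g h : G) :
    invSlantProduct ω g h g = (ω g h g)⁻¹ := by
  rw [invSlantProduct, inv_mul_cancel, one_mul]

theorem val_invSlantProduct {G k : Type*} [DivisionMonoid k] (ω : G → G → G → kˣ) (g h l : G) :
    (invSlantProduct ω g h l).val = (ω h l g : k)⁻¹ * (ω h g l : k) * (ω g h l : k)⁻¹ := by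
  simp only [invSlantProduct, Units.val_mul, Units.val_inv_eq_inv_val]

theorem map_pow_eq_pow_mul_prod_of_map_mul_right {M N : Type*} [Monoid M] [CommMonoid N]
    {f θ : M → N} {c : M} (f_one : f 1 = 1) (f_mul_right : ∀ x, f (x * c) = θ x * (f x * f c))
    (n : ℕ) : f (c ^ n) = f c ^ n * ∏ i ∈ Finset.range n, θ (c ^ i) := by
  induction n with
  | zero => simp [f_one]
  | succ n ih =>
    calc f (c ^ (n + 1))
        = θ (c ^ n) * (f (c ^ n) * f c) := by rw [pow_succ, f_mul_right]
      _ = f c ^ (n + 1) * ((∏ i ∈ Finset.range n, θ (c ^ i)) * θ (c ^ n)) := by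
        rw [ih, pow_succ]; ac_rfl
      _ = f c ^ (n + 1) * ∏ i ∈ Finset.range (n + 1), θ (c ^ i) := by rw [Finset.prod_range_succ]

theorem quasiYD_chi_on_powers_general {k : Type*} [CommMonoid k] {G : Type*} [Monoid G]
    (g c : G) (ω : G → G → G → kˣ) (χ : G → k) (hχ1 : χ 1 = 1)
    (hprod : ∀ h l : G, χ (h * l) = (invSlantProduct ω g h l).val * (χ h * χ l)) :
    (∀ t : ℕ, χ (c ^ t) =
      χ c ^ t * ∏ i ∈ Finset.range t, (invSlantProduct ω g (c ^ i) c).val) ∧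
    (∀ t : ℕ, χ (g ^ t) =
      χ g ^ t * ∏ i ∈ Finset.range t, (ω g (g ^ i) g)⁻¹.val) := by
  have chi_pow (d : G) (t : ℕ) :
      χ (d ^ t) = χ d ^ t * ∏ i ∈ Finset.range t, (invSlantProduct ω g (d ^ i) d).val :=
    map_pow_eq_pow_mul_prod_of_map_mul_right (θ := fun x => (invSlantProduct ω g x d).val)
      hχ1 (fun x => hprod x d) t
  exact ⟨chi_pow c, by simpa only [invSlantProduct_self_right] using chi_pow g⟩

/-- Lemma 3.9 (lem:ChiCyclic): the value of `χ` on powers of a grouplike element,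
formulas (3.5) and (3.6) of the paper. -/
theorem quasiYD_chi_on_powers {k : Type*} [Field k] {G : Type*} [Group G]
    (g c : G) (ω : G → G → G → kˣ) (χ : G → k) (hχ1 : χ 1 = 1)
    (hprod : ∀ h l : G, χ (h * l) =
      ((ω h l g : k))⁻¹ * χ l * (ω h g l : k) * χ h * ((ω g h l : k))⁻¹) :
    (∀ t : ℕ, 1 ≤ t →
      χ (c ^ t) = χ c ^ t *
        ∏ i ∈ Finset.range t,
          (((ω (c ^ i) c g : k))⁻¹ * (ω (c ^ i) g c : k) * ((ω g (c ^ i) c : k))⁻¹)) ∧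
    (∀ t : ℕ, 1 ≤ t →
      χ (g ^ t) = χ g ^ t * ∏ i ∈ Finset.range t, ((ω g (g ^ i) g : k))⁻¹) := by
  obtain ⟨chi_pow, chi_pow_self⟩ := quasiYD_chi_on_powers_general g c ω χ hχ1 fun h l => by
    rw [hprod, val_invSlantProduct]; ring
  simp only [val_invSlantProduct, Units.val_inv_eq_inv_val] at chi_pow chi_pow_self
  exact ⟨fun t _ => chi_pow t, fun t _ => chi_pow_self t⟩
end

section
/- Let k be a field, n ≥ 2, q ∈ k a primitive n²-th root of unity, ζ := q^n, and 0 ≤ w ≤ n−1. Define ω_{ζ^w} : (ZMod n)³ → kˣ by ω_{ζ^w}(a,b,c) = ζ^{w · val(a) · [val(b) + val(c) ≥ n]}. Let z ∈ ZMod n and χ : ZMod n → k. Then the following are equivalent: (1) χ(0) = 1 and for all a, b ∈ ZMod n: χ(a+b) = ω_{ζ^w}(a,b,z)⁻¹ · χ(b) · ω_{ζ^w}(a,z,b) · χ(a) · ω_{ζ^w}(z,a,b)⁻¹; (2) χ(t) = χ(1)^{val(t)} for all t ∈ ZMod n, and χ(1)^n = ζ^{w · val(z)}. -/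
/-- The standard 3-cocycle `ω_{ζ^w}(a,b,c) = ζ^{w·val(a)·[val(b)+val(c) ≥ n]}` on
`ZMod n` with values in `kˣ`. -/
def omegaZetaW {k : Type*} [Field k] {n : ℕ} (ζ : kˣ) (w : ℕ) (a b c : ZMod n) : kˣ :=
  ζ ^ (w * a.val * (if n ≤ b.val + c.val then 1 else 0))

/-!
The formula is governed by carrying in addition modulo `n`. Since `ω(a, b, z)` is symmetric in
`b` and `z`, two of the three cocycle factors cancel, and what is left says that `χ` is
multiplicative up to a factor `ζ ^ (w * val z)` whenever the sum of the representatives overflows.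
Counting up from `0`, no overflow occurs before `n - 1`, which makes `χ` a power of `χ 1`; the first
overflow, at `(n - 1) + 1`, then fixes `χ 1 ^ n`. Conversely, reducing the exponent of `g ^ m`
modulo `n` costs one factor `g ^ n` exactly when there is an overflow.
-/

section CarryCharacter

variable {M : Type*} [Monoid M] {n : ℕ}

/-- The carry 2-cocycle on `ZMod n` with value `c`: adding representatives contributes a factor `c`
exactly when the sum reaches `n`. When `c` generates an infinite cyclic group, it is the factor set
of the extension `ℤ → ℤ → ℤ/n`. -/
def carryFactor (c : M) (a b : ZMod n) : M :=
  if n ≤ a.val + b.val then c else 1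

/-- A normalized projective character of `ZMod n` whose factor set is the carry 2-cocycle with
value `c`. -/
structure IsCarryCharacter (c : M) (χ : ZMod n → M) : Prop where
  map_zero : χ 0 = 1
  map_mul_map : ∀ a b, χ a * χ b = carryFactor c a b * χ (a + b)

lemma carryFactor_of_le {a b : ZMod n} (c : M) (h : n ≤ a.val + b.val) : carryFactor c a b = c :=
  if_pos h

lemma carryFactor_of_lt {a b : ZMod n} (c : M) (h : a.val + b.val < n) : carryFactor c a b = 1 :=
  if_neg h.not_ge

lemma carryFactor_neg_one_one (hn : 2 ≤ n) (c : M) : carryFactor c (-1 : ZMod n) 1 = c := by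
  have : Fact (1 < n) := ⟨hn⟩
  have : NeZero n := ⟨by omega⟩
  refine carryFactor_of_le c ?_
  rw [ZMod.val_neg_of_ne_zero, ZMod.val_one]
  omega

lemma pow_val_mul_pow_val [NeZero n] (g : M) (a b : ZMod n) :
    g ^ a.val * g ^ b.val = carryFactor (g ^ n) a b * g ^ (a + b).val := by
  rw [← pow_add]
  rcases lt_or_ge (a.val + b.val) n with h | h
  · rw [carryFactor_of_lt _ h, one_mul, ZMod.val_add_of_lt h]
  · rw [carryFactor_of_le _ h, ← pow_add, add_comm n, ← ZMod.val_add_val_of_le h]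

namespace IsCarryCharacter

variable {c : M} {χ : ZMod n → M}

lemma map_add_of_lt (hχ : IsCarryCharacter c χ) {a b : ZMod n} (h : a.val + b.val < n) :
    χ (a + b) = χ a * χ b := by
  rw [hχ.map_mul_map, carryFactor_of_lt c h, one_mul]

lemma map_natCast (hχ : IsCarryCharacter c χ) {m : ℕ} (hm : m < n) :
    χ (m : ZMod n) = χ 1 ^ m := by
  induction m with
  | zero => simpa using hχ.map_zero
  | succ m ih =>
    have no_carry : (m : ZMod n).val + (1 : ZMod n).val < n := by
      rwa [ZMod.val_natCast_of_lt (by omega), ZMod.val_one'' (by omega)]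
    rw [Nat.cast_succ, hχ.map_add_of_lt no_carry, ih (by omega), pow_succ]

lemma eq_pow_val [NeZero n] (hχ : IsCarryCharacter c χ) (t : ZMod n) : χ t = χ 1 ^ t.val := by
  simpa using hχ.map_natCast t.val_lt

lemma map_one_pow (hχ : IsCarryCharacter c χ) (hn : 2 ≤ n) : χ 1 ^ n = c := by
  have : χ (-1) = χ 1 ^ (n - 1) := by
    simpa [Nat.cast_pred (by omega : 0 < n)] using hχ.map_natCast (by omega : n - 1 < n)
  calc
    χ 1 ^ n = χ (-1) * χ 1 := by rw [this, pow_sub_one_mul (by omega)]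
    _ = carryFactor c (-1) 1 * χ (-1 + 1) := hχ.map_mul_map _ _
    _ = c := by rw [carryFactor_neg_one_one hn, neg_add_cancel, hχ.map_zero, mul_one]

end IsCarryCharacter

lemma isCarryCharacter_pow_val [NeZero n] (g : M) :
    IsCarryCharacter (g ^ n) fun t : ZMod n ↦ g ^ t.val where
  map_zero := by simp
  map_mul_map := pow_val_mul_pow_val g

theorem isCarryCharacter_iff (hn : 2 ≤ n) {c : M} {χ : ZMod n → M} :
    IsCarryCharacter c χ ↔ (∀ t, χ t = χ 1 ^ t.val) ∧ χ 1 ^ n = c := by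
  have : NeZero n := ⟨by omega⟩
  constructor
  · exact fun hχ ↦ ⟨hχ.eq_pow_val, hχ.map_one_pow hn⟩
  · rintro ⟨hpow, rfl⟩
    have hχ : IsCarryCharacter (χ 1 ^ n) fun t : ZMod n ↦ χ 1 ^ t.val := isCarryCharacter_pow_val _
    rwa [← funext hpow] at hχ

end CarryCharacter

section Cocycle

variable {k : Type*} [Field k] {n : ℕ} (ζ : kˣ) (w : ℕ)

lemma omegaZetaW_right_comm (a b c : ZMod n) : omegaZetaW ζ w a b c = omegaZetaW ζ w a c b := by
  simp only [omegaZetaW, add_comm b.val]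

lemma coe_omegaZetaW (a b c : ZMod n) :
    (omegaZetaW ζ w a b c : k) = carryFactor ((ζ : k) ^ (w * a.val)) b c := by
  simp only [omegaZetaW, carryFactor]
  split_ifs <;> simp

lemma eq_quasiYD_product_iff (a b z : ZMod n) (r s t : k) :
    t = (omegaZetaW ζ w a b z : k)⁻¹ * s * (omegaZetaW ζ w a z b : k) * r *
        (omegaZetaW ζ w z a b : k)⁻¹ ↔
      r * s = carryFactor ((ζ : k) ^ (w * z.val)) a b * t := by
  have cancel : (omegaZetaW ζ w a b z : k)⁻¹ * s * (omegaZetaW ζ w a z b : k) * r = r * s := by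
    rw [omegaZetaW_right_comm ζ w a z b, mul_right_comm _ s,
      inv_mul_cancel₀ (Units.ne_zero _), one_mul, mul_comm]
  rw [cancel, ← coe_omegaZetaW, eq_mul_inv_iff_mul_eq₀ (Units.ne_zero _), eq_comm, mul_comm t]

end Cocycle

theorem quasiYD_datum_cyclic_characterization_general {k : Type*} [Field k]
    {n : ℕ} (hn : 2 ≤ n) (ζ : kˣ) (w : ℕ) (z : ZMod n) (χ : ZMod n → k) :
    (χ 0 = 1 ∧ ∀ a b : ZMod n,
        χ (a + b) =
          (omegaZetaW ζ w a b z : k)⁻¹ * χ b * (omegaZetaW ζ w a z b : k) *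
            χ a * (omegaZetaW ζ w z a b : k)⁻¹)
    ↔ ((∀ t : ZMod n, χ t = χ 1 ^ t.val) ∧ χ 1 ^ n = (ζ : k) ^ (w * z.val)) := by
  simp only [eq_quasiYD_product_iff]
  rw [← isCarryCharacter_iff hn]
  exact ⟨fun ⟨h0, hmul⟩ ↦ ⟨h0, hmul⟩, fun hχ ↦ ⟨hχ.map_zero, hχ.map_mul_map⟩⟩

/-- Proposition 6.2 (pro:speriamo): characterization of quasi-Yetter–Drinfeld data for
`(kC_n, ω_{ζ^w})`: the quasi-YD product formula for `(ω_{ζ^w}, z, χ)` holds iff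
`χ(t) = χ(1)^{val t}` for all `t` and `χ(1)^n = ζ^{w·val(z)}`. -/
theorem quasiYD_datum_cyclic_characterization {k : Type*} [Field k]
    (n : ℕ) (hn : 2 ≤ n) (q : kˣ) (hq : IsPrimitiveRoot q (n ^ 2))
    (w : ℕ) (hw : w ≤ n - 1) (z : ZMod n) (χ : ZMod n → k) :
    (χ 0 = 1 ∧ ∀ a b : ZMod n,
        χ (a + b) =
          ((omegaZetaW (q ^ n) w a b z : k))⁻¹ * χ b * (omegaZetaW (q ^ n) w a z b : k) *
            χ a * ((omegaZetaW (q ^ n) w z a b : k))⁻¹)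
    ↔ ((∀ t : ZMod n, χ t = χ 1 ^ t.val) ∧ χ 1 ^ n = ((q ^ n : kˣ) : k) ^ (w * z.val)) :=
  quasiYD_datum_cyclic_characterization_general hn (q ^ n) w z χ
end

section
/- Let k be a field, G a group (written multiplicatively), ω : G × G × G → kˣ, and v : G × G → kˣ. Define ω^v : G × G × G → kˣ by ω^v(g,h,l) := v(h,l) · v(g, h·l) · ω(g,h,l) · v(g·h, l)⁻¹ · v(g,h)⁻¹. Assume ω(h, 1, l) = 1 for all h, l ∈ G, and assume ω^v(h, 1, l) = 1 for all h, l ∈ G. Then, setting a := v(1,1)⁻¹, one has a · v(h, 1) = 1 and a · v(1, h) = 1 for all h ∈ G; equivalently, v(h,1) = v(1,h) = v(1,1) for all h ∈ G. -/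
/-!
At `(h, 1, l)` the two factors `v h l` in the twisted reassociator cancel and leave
`v 1 l * (v h 1)⁻¹`. If this is always `1`, then `v 1 l = v h 1` for all independent `h` and `l`,
so both sides are the constant `v 1 1`.
-/

section

variable {G A : Type*}

/-- A gauge transformation on a group algebra, encoded by its values on pairs of group elements:
only the unit condition is recorded, since convolution invertibility amounts to the values lying
in a group `A` (such as `kˣ`). -/
def IsGaugeTransformation [One G] [One A] (v : G → G → A) : Prop :=
  ∀ h : G, v h 1 = 1 ∧ v 1 h = 1

/-- The twist `ω^v` of a reassociator `ω` by `v`, evaluated on group elements. The order of the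
factors is the paper's, which matters only when `A` is not commutative. -/
def twistedReassociator [Mul G] [Group A] (ω : G → G → G → A) (v : G → G → A) (g h l : G) : A :=
  v h l * v g (h * l) * ω g h l * (v (g * h) l)⁻¹ * (v g h)⁻¹

theorem twistedReassociator_one_middle [MulOneClass G] [Group A] {ω : G → G → G → A}
    (v : G → G → A) {h l : G} (hω : ω h 1 l = 1) :
    twistedReassociator ω v h 1 l = v 1 l * (v h 1)⁻¹ := by
  rw [twistedReassociator, hω, one_mul, mul_one, mul_one, mul_inv_cancel_right]

theorem isGaugeTransformation_inv_mul [One G] [Group A] {v : G → G → A}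
    (hv : ∀ h l : G, v 1 l = v h 1) :
    IsGaugeTransformation fun g h ↦ (v 1 1)⁻¹ * v g h :=
  fun h ↦ ⟨inv_mul_eq_one.mpr (hv h 1), inv_mul_eq_one.mpr (hv 1 h).symm⟩

theorem normalize_to_gauge_transformation_general [MulOneClass G] [Group A]
    (ω : G → G → G → A) (v : G → G → A) (hω : ∀ h l : G, ω h 1 l = 1)
    (hωv : ∀ h l : G, twistedReassociator ω v h 1 l = 1) :
    IsGaugeTransformation fun g h ↦ (v 1 1)⁻¹ * v g h := by
  refine isGaugeTransformation_inv_mul fun h l ↦ mul_inv_eq_one.mp ?_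
  rw [← twistedReassociator_one_middle v (hω h l), hωv]

end

/-- Lemma 2.2 (lm: normalize to a gauge trans), group-algebra case: if the twisted
reassociator `ω^v(g,h,l) = v(h,l)·v(g,hl)·ω(g,h,l)·v(gh,l)⁻¹·v(g,h)⁻¹` is normalized
(and `ω` itself is normalized in the middle slot), then `a·v` with `a = v(1,1)⁻¹` is a
gauge transformation. -/
theorem normalize_to_gauge_transformation {k : Type*} [Field k] {G : Type*} [Group G]
    (ω : G → G → G → kˣ) (v : G → G → kˣ)
    (hω : ∀ h l : G, ω h 1 l = 1)
    (hωv : ∀ h l : G,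
      v 1 l * v h (1 * l) * ω h 1 l * (v (h * 1) l)⁻¹ * (v h 1)⁻¹ = 1) :
    ∀ h : G, (v 1 1)⁻¹ * v h 1 = 1 ∧ (v 1 1)⁻¹ * v 1 h = 1 :=
  normalize_to_gauge_transformation_general ω v hω hωv
end

section
/- Let k be a field, n ≥ 2, q ∈ k a primitive n²-th root of unity, ζ := q^n, and 0 ≤ i ≤ n−1. Define v : (ZMod n²)² → k by v(a,b) := q^{i · val(a) · (val(b) − (val(b) mod n))}, where val(x) ∈ {0, …, n²−1} is the canonical representative of x ∈ ZMod n². Then for all a, b, c ∈ ZMod n²: ζ^{i · (val(a) mod n) · [(val(b) mod n) + (val(c) mod n) ≥ n]} = v(b,c) · v(a+b, c)⁻¹ · v(a, b+c) · v(a,b)⁻¹. -/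
/-- The 2-cochain `v_i(a,b) = q^{i·val(a)·(val(b) − val(b) mod n)}` on `ZMod n²`. -/
def vCochain {k : Type*} [Field k] (n : ℕ) (q : k) (i : ℕ) (a b : ZMod (n ^ 2)) : k :=
  q ^ (i * a.val * (b.val - b.val % n))

/-!
The exponent of `v_i` is `i * (a * b - a * s b)`, where `s b` is the representative of `b` modulo
`n` in `{0, …, n - 1}`. The bilinear part `i * a * b` is a cocycle, so the coboundary of the
exponent is `i * a * (s b + s c - s (b + c))`, and the bracket is `n` times the carry
of `s b + s c`. As `n * n` vanishes in the exponents, the factor `a` may be replaced by its residue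
modulo `n`.
-/

section Exponent

variable {N : ℕ}

/-- The carry of the addition of `b` and `c` modulo `n`, computed on the representatives `val % n`.
For `n ∣ N` it is the pullback to `ZMod N` of the 2-cocycle of the extension of `ZMod n` by `ℤ`
given by multiplication by `n`; it is one factor of the exponent in the 3-cocycle `ω_{ζ^i}`. -/
def carry (n : ℕ) (b c : ZMod N) : ℕ :=
  if n ≤ b.val % n + c.val % n then 1 else 0

/-- The exponent of the 2-cochain `v_i`, on `ZMod N` instead of `ZMod (n ^ 2)`. It is a natural
number, so that it can be applied to an element of any monoid. -/
def vExponent (n i : ℕ) (a b : ZMod N) : ℕ :=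
  i * a.val * (b.val - b.val % n)

variable [NeZero N] {n : ℕ}

theorem val_add_mod_add_mul_carry (hn : n ∣ N) (b c : ZMod N) :
    (b + c).val % n + n * carry n b c = b.val % n + c.val % n := by
  rw [ZMod.val_add, Nat.mod_mod_of_dvd _ hn, carry, mul_ite, mul_one, mul_zero,
    Nat.add_mod_add_ite]

theorem natCast_mul_val_mod (hN : N ∣ n ^ 2) (a : ZMod N) :
    (n : ZMod N) * (a.val % n : ℕ) = n * a := by
  have n_sq_eq_zero : (n : ZMod N) ^ 2 = 0 := by
    exact_mod_cast (ZMod.natCast_eq_zero_iff (n ^ 2) N).2 hN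
  have division : ((a.val % n : ℕ) : ZMod N) + n * (a.val / n : ℕ) = a := by
    rw [← Nat.cast_mul, ← Nat.cast_add, Nat.mod_add_div, ZMod.natCast_zmod_val]
  linear_combination (n : ZMod N) * division - ((a.val / n : ℕ) : ZMod N) * n_sq_eq_zero

theorem natCast_vExponent (n i : ℕ) (a b : ZMod N) :
    (vExponent n i a b : ZMod N) = i * a * (b - (b.val % n : ℕ)) := by
  rw [vExponent, Nat.cast_mul, Nat.cast_mul, Nat.cast_sub (Nat.mod_le _ _),
    ZMod.natCast_zmod_val, ZMod.natCast_zmod_val]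

theorem vExponent_coboundary (n i : ℕ) (a b c : ZMod N) :
    (vExponent n i b c - vExponent n i (a + b) c + vExponent n i a (b + c) - vExponent n i a b :
        ZMod N) =
      i * a * ((b.val % n : ℕ) + (c.val % n : ℕ) - ((b + c).val % n : ℕ)) := by
  simp only [natCast_vExponent]
  ring

theorem vExponent_coboundary_eq_carry (hn : n ∣ N) (hN : N ∣ n ^ 2) (i : ℕ) (a b c : ZMod N) :
    (vExponent n i b c - vExponent n i (a + b) c + vExponent n i a (b + c) - vExponent n i a b :
        ZMod N) =
      n * (i * (a.val % n : ℕ) * carry n b c) := by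
  have carry_eq : ((b.val % n : ℕ) + (c.val % n : ℕ) - ((b + c).val % n : ℕ) : ZMod N) =
      n * carry n b c := by
    rw [sub_eq_iff_eq_add']
    exact_mod_cast congrArg (Nat.cast : ℕ → ZMod N) (val_add_mod_add_mul_carry hn b c).symm
  calc
    _ = i * a * (n * carry n b c) := by rw [vExponent_coboundary, carry_eq]
    _ = i * (n * a) * carry n b c := by ring
    _ = i * (n * (a.val % n : ℕ)) * carry n b c := by rw [natCast_mul_val_mod hN]
    _ = n * (i * (a.val % n : ℕ) * carry n b c) := by ring

theorem carry_add_vExponent_modEq (hn : n ∣ N) (hN : N ∣ n ^ 2) (i : ℕ) (a b c : ZMod N) :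
    n * (i * (a.val % n) * carry n b c) + vExponent n i a b + vExponent n i (a + b) c ≡
      vExponent n i b c + vExponent n i a (b + c) [MOD N] := by
  rw [← ZMod.natCast_eq_natCast_iff]
  push_cast
  linear_combination -vExponent_coboundary_eq_carry hn hN i a b c

end Exponent

theorem pullback_cocycle_is_coboundary_general {G : Type*} [DivisionMonoid G] {N n : ℕ} [NeZero N]
    (hn : n ∣ N) (hN : N ∣ n ^ 2) {q : G} (hq : q ^ N = 1) (i : ℕ) (a b c : ZMod N) :
    (q ^ n) ^ (i * (a.val % n) * carry n b c) =
      q ^ vExponent n i b c * (q ^ vExponent n i (a + b) c)⁻¹ * q ^ vExponent n i a (b + c) *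
        (q ^ vExponent n i a b)⁻¹ := by
  have isUnit_pow (m : ℕ) : IsUnit (q ^ m) := (IsUnit.of_pow_eq_one hq (NeZero.ne N)).pow m
  have inv_comm : (q ^ vExponent n i (a + b) c)⁻¹ * q ^ vExponent n i a (b + c) =
      q ^ vExponent n i a (b + c) * (q ^ vExponent n i (a + b) c)⁻¹ := by
    rw [(isUnit_pow _).eq_mul_inv_iff_mul_eq, mul_assoc, pow_mul_comm,
      (isUnit_pow _).inv_mul_cancel_left]
  rw [(isUnit_pow _).eq_mul_inv_iff_mul_eq, mul_assoc (q ^ vExponent n i b c), inv_comm,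
    ← mul_assoc, (isUnit_pow _).eq_mul_inv_iff_mul_eq]
  simp only [← pow_mul, ← pow_add]
  exact pow_eq_pow_of_modEq (carry_add_vExponent_modEq hn hN i a b c) hq

/-- End of Section 5.1 of the paper: the pullback of the cocycle `ω_{ζ^i}` on `ZMod n`
along the projection `ZMod n² → ZMod n` is the coboundary of `v_i`. -/
theorem pullback_cocycle_is_coboundary {k : Type*} [Field k]
    (n : ℕ) (hn : 2 ≤ n) (q : k) (hq : IsPrimitiveRoot q (n ^ 2))
    (i : ℕ) (hi : i ≤ n - 1) :
    ∀ a b c : ZMod (n ^ 2),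
      (q ^ n) ^ (i * (a.val % n) * (if n ≤ b.val % n + c.val % n then 1 else 0)) =
        vCochain n q i b c * (vCochain n q i (a + b) c)⁻¹ * vCochain n q i a (b + c) *
          (vCochain n q i a b)⁻¹ := by
  have : NeZero n := ⟨by lia⟩
  exact pullback_cocycle_is_coboundary_general (dvd_pow_self n two_ne_zero) dvd_rfl hq.pow_eq_one i
end

section
/- Let k be a field, G a group (written multiplicatively), g, c ∈ G, ω : G × G × G → kˣ, and χ : G → k with χ(1) = 1, satisfying the quasi-YD product formula: χ(h·l) = ω(h,l,g)⁻¹ · χ(l) · ω(h,g,l) · χ(h) · ω(g,h,l)⁻¹ for all h, l ∈ G. Assume in addition that ω is symmetric in its last two arguments: ω(x,y,z) = ω(x,z,y) for all x,y,z ∈ G. Then for every integer t ≥ 1: χ(c^t) = χ(c)^t · ∏_{i=0}^{t−1} ω(g, c^i, c)⁻¹. -/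
theorem map_pow_of_map_mul_eq_mul_mul {M R : Type*} [Monoid M] [CommMonoid R]
    {f : M → R} {σ : M → M → R} (hf_one : f 1 = 1)
    (hf_mul : ∀ x y, f (x * y) = f x * f y * σ x y) (c : M) (n : ℕ) :
    f (c ^ n) = f c ^ n * ∏ i ∈ Finset.range n, σ (c ^ i) c := by
  induction n with
  | zero => simp only [pow_zero, hf_one, Finset.prod_range_zero, mul_one]
  | succ n ih =>
    calc f (c ^ (n + 1))
        = f (c ^ n) * f c * σ (c ^ n) c := by rw [pow_succ, hf_mul]
      _ = f c ^ n * (∏ i ∈ Finset.range n, σ (c ^ i) c) * f c * σ (c ^ n) c := by rw [ih]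
      _ = f c ^ (n + 1) * ∏ i ∈ Finset.range (n + 1), σ (c ^ i) c := by
        rw [mul_right_comm (f c ^ n), ← pow_succ, mul_assoc, ← Finset.prod_range_succ]

section QuasiYD

variable {R M : Type*} [CommMonoid R] {g : M} {ω : M → M → M → Rˣ} {χ : M → R}

theorem quasiYD_chi_mul_of_symm [Mul M]
    (hprod : ∀ h l : M, χ (h * l) =
      ↑(ω h l g)⁻¹ * χ l * (ω h g l : R) * χ h * ↑(ω g h l)⁻¹)
    (hsymm : ∀ x y : M, ω x y g = ω x g y) (h l : M) :
    χ (h * l) = χ h * χ l * ↑(ω g h l)⁻¹ := by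
  rw [hprod, hsymm, mul_right_comm _ (χ l), Units.inv_mul, one_mul, mul_comm (χ l)]

theorem quasiYD_chi_on_powers_symm_general [Monoid M] (hχ1 : χ 1 = 1)
    (hprod : ∀ h l : M, χ (h * l) =
      ↑(ω h l g)⁻¹ * χ l * (ω h g l : R) * χ h * ↑(ω g h l)⁻¹)
    (hsymm : ∀ x y : M, ω x y g = ω x g y) (c : M) (t : ℕ) :
    χ (c ^ t) = χ c ^ t * ∏ i ∈ Finset.range t, (↑(ω g (c ^ i) c)⁻¹ : R) :=
  map_pow_of_map_mul_eq_mul_mul hχ1 (quasiYD_chi_mul_of_symm hprod hsymm) c t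

end QuasiYD

/-- Remark 3.10 (rem: datum short), formula (3.7): simplification of Lemma 3.9 when
the reassociator `ω` is symmetric in its last two arguments. -/
theorem quasiYD_chi_on_powers_symm {k : Type*} [Field k] {G : Type*} [Group G]
    (g c : G) (ω : G → G → G → kˣ) (χ : G → k) (hχ1 : χ 1 = 1)
    (hprod : ∀ h l : G, χ (h * l) =
      ((ω h l g : k))⁻¹ * χ l * (ω h g l : k) * χ h * ((ω g h l : k))⁻¹)
    (hsymm : ∀ x y z : G, ω x y z = ω x z y) :
    ∀ t : ℕ, 1 ≤ t →
      χ (c ^ t) = χ c ^ t * ∏ i ∈ Finset.range t, ((ω g (c ^ i) c : k))⁻¹ := by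
  simp only [← Units.val_inv_eq_inv_val] at hprod ⊢
  exact fun t _ => quasiYD_chi_on_powers_symm_general hχ1 hprod (fun x y => hsymm x y g) c t
end

section
/- Let k be a field, G a group (written multiplicatively), g ∈ G, ω : G × G × G → kˣ, and χ : G → k. Define functions χ_{[n]} : G → k recursively by χ_{[0]}(h) := 1 and, for n ≥ 1, χ_{[n]}(h) := ω(h, g, g^{n−1}) · χ(h) · ω(g, h, g^{n−1})⁻¹ · χ_{[n−1]}(h) · ω(g, g^{n−1}, h). Then for every n ≥ 1 and every h ∈ G: χ_{[n]}(h) = [ ∏_{i=0}^{n−1} ω(h, g, g^{n−1−i}) · χ(h) · ω(g, h, g^{n−1−i})⁻¹ ] · [ ∏_{i=0}^{n−1} ω(g, g^i, h) ]. In particular, χ_{[n]}(g) = χ(g)^n · ∏_{i=0}^{n−1} ω(g, g^i, g). -/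
/-- The iteratively defined functionals `χ_{[n]}` of formula (4.5) of the paper,
evaluated on group elements: `χ_{[0]} = 1` and
`χ_{[n]}(h) = ω(h,g,g^{n-1}) · χ(h) · ω(g,h,g^{n-1})⁻¹ · χ_{[n-1]}(h) · ω(g,g^{n-1},h)`. -/
def chiIter {k : Type*} [Field k] {G : Type*} [Group G]
    (g : G) (ω : G → G → G → kˣ) (χ : G → k) : ℕ → G → k
  | 0, _ => 1
  | n + 1, h =>
      (ω h g (g ^ n) : k) * χ h * ((ω g h (g ^ n) : k))⁻¹ * chiIter g ω χ n h *
        (ω g (g ^ n) h : k)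

section

variable {k : Type*} [Field k] {G : Type*} [Group G] (g : G) (ω : G → G → G → kˣ) (χ : G → k)

theorem chiIter_eq_prod_mul_prod (n : ℕ) (h : G) :
    chiIter g ω χ n h =
      (∏ i ∈ Finset.range n, ((ω h g (g ^ i) : k) * χ h * (ω g h (g ^ i) : k)⁻¹)) *
        ∏ i ∈ Finset.range n, (ω g (g ^ i) h : k) := by
  rw [← Finset.prod_mul_distrib]
  refine (Finset.prod_range_induction _ (chiIter g ω χ · h) rfl n fun m _ => ?_).symm
  rw [chiIter, mul_assoc, mul_left_comm]

theorem chiIter_self (n : ℕ) :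
    chiIter g ω χ n g = χ g ^ n * ∏ i ∈ Finset.range n, (ω g (g ^ i) g : k) := by
  have twist_eq (i : ℕ) : (ω g g (g ^ i) : k) * χ g * (ω g g (g ^ i) : k)⁻¹ = χ g := by
    rw [mul_comm, inv_mul_cancel_left₀ (ω g g (g ^ i)).ne_zero]
  simp only [chiIter_eq_prod_mul_prod, twist_eq, Finset.prod_const, Finset.card_range]

end

/-- Formulas (4.6) and (4.7) of Proposition 4.3 (prop: structure of T(V)):
the closed form for `χ_{[n]}`, together with the special value `χ_{[n]}(g)`. -/
theorem chiIter_closed_form {k : Type*} [Field k] {G : Type*} [Group G]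
    (g : G) (ω : G → G → G → kˣ) (χ : G → k) :
    (∀ n : ℕ, 1 ≤ n → ∀ h : G,
      chiIter g ω χ n h =
        (∏ i ∈ Finset.range n,
          ((ω h g (g ^ (n - 1 - i)) : k) * χ h * ((ω g h (g ^ (n - 1 - i)) : k))⁻¹)) *
          ∏ i ∈ Finset.range n, (ω g (g ^ i) h : k)) ∧
    (∀ n : ℕ, 1 ≤ n →
      chiIter g ω χ n g = χ g ^ n * ∏ i ∈ Finset.range n, (ω g (g ^ i) g : k)) := by
  refine ⟨fun n _ h => ?_, fun n _ => chiIter_self g ω χ n⟩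
  rw [chiIter_eq_prod_mul_prod, Finset.prod_range_reflect
    (fun i => (ω h g (g ^ i) : k) * χ h * (ω g h (g ^ i) : k)⁻¹)]
end

section
/- Let k be a field, p an odd prime, q ∈ k a primitive 16-th root of unity, and ζ := q⁴. Let G be the dicyclic group of order 4p (Mathlib's QuaternionGroup p), with elements a(i) and xa(i) for i ∈ ZMod 2p, where a(i)·a(j) = a(i+j) and the element a(1) has order 2p. Then: (a) the assignment π(a(i)) := 2·ι(i), π(xa(i)) := 2·ι(i) + 1, where ι : ZMod 2p → ZMod 4 is induced by i ↦ i (well-defined on doubles since p is odd), is a group homomorphism π : G → ZMod 4; (b) the element z := a(1)^p satisfies π(z) = 2 and z lies in the center of G; (c) defining ω : (ZMod 4)³ → kˣ by ω(a,b,c) := ζ^{val(a)·[val(b)+val(c) ≥ 4]} and χ : ZMod 4 → k by χ(t) := q^{2·val(t)}, the function χ_G := χ ∘ π satisfies χ_G(1) = 1 and the quasi-YD product formula: for all h, l ∈ G, χ_G(h·l) = ω(π(h), π(l), 2)⁻¹ · χ_G(l) · ω(π(h), 2, π(l)) · χ_G(h) · ω(2, π(h), π(l))⁻¹. -/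
/-- The projection `π : Dic_p → ZMod 4`, `π(a(i)) = 2·i`, `π(xa(i)) = 2·i + 1`,
from Example 6.5 of the paper (Mathlib's `QuaternionGroup p` is the dicyclic group
of order `4p`). -/
def dicProj (p : ℕ) : QuaternionGroup p → ZMod 4
  | QuaternionGroup.a i => ((2 * i.val : ℕ) : ZMod 4)
  | QuaternionGroup.xa i => ((2 * i.val + 1 : ℕ) : ZMod 4)

/-- The cocycle `ω(a,b,c) = ζ^{val(a)·[val(b)+val(c) ≥ 4]}` on `ZMod 4`. -/
def omegaDic {k : Type*} [Field k] (ζ : kˣ) (a b c : ZMod 4) : kˣ :=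
  ζ ^ (a.val * (if 4 ≤ b.val + c.val then 1 else 0))

/-- The map `χ : ZMod 4 → k`, `χ(t) = q^{2·val(t)}`. -/
def chiDic {k : Type*} [Field k] (q : kˣ) (t : ZMod 4) : k := (q : k) ^ (2 * t.val)

/-! Since `4 = 0` in `ZMod 4`, the doubling map `ZMod (2 * n) →+ ZMod 4` takes equal values at
`i` and `-i`; this sign is all that separates the relations of `QuaternionGroup n` from addition
of exponents, except for `xa i * xa j`, where the extra `a n` contributes `2 * n = 2` and so
matches `1 + 1`. On `ZMod 4`, the factor `ω (2, s, t) = q ^ (8 * carry)` is exactly the defect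
of multiplicativity of `χ (t) = q ^ (2 * t)` caused by the carry in `s + t`, while the other two
factors cancel because `ω` is symmetric in its last two arguments. -/

section Projection

variable {n : ℕ}

/-- The doubling map `i ↦ 2 * i` from `ZMod (2 * n)` to `ZMod 4`, the additive part of `dicProj`.
It is obtained from the map on `ℤ`, so that additivity needs no representatives. -/
def dicDouble (n : ℕ) : ZMod (2 * n) →+ ZMod 4 :=
  ZMod.lift (2 * n) ⟨(AddMonoidHom.mulLeft 2).comp (Int.castAddHom (ZMod 4)), by
    simp only [AddMonoidHom.comp_apply, Int.coe_castAddHom, AddMonoidHom.coe_mulLeft]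
    push_cast
    linear_combination (n : ZMod 4) * CharP.ofNat_eq_zero (ZMod 4) 4⟩

lemma dicDouble_intCast (m : ℤ) : dicDouble n m = 2 * m :=
  ZMod.lift_coe ..

lemma dicDouble_natCast (m : ℕ) : dicDouble n m = 2 * m := by
  exact_mod_cast dicDouble_intCast (n := n) m

lemma dicDouble_eq_two_mul_val [NeZero n] (i : ZMod (2 * n)) :
    dicDouble n i = 2 * (i.val : ZMod 4) := by
  rw [← dicDouble_natCast, ZMod.natCast_zmod_val]

lemma dicDouble_neg (i : ZMod (2 * n)) : dicDouble n (-i) = dicDouble n i := by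
  obtain ⟨m, rfl⟩ := ZMod.intCast_surjective i
  rw [← Int.cast_neg, dicDouble_intCast, dicDouble_intCast, Int.cast_neg]
  linear_combination -(m : ZMod 4) * CharP.ofNat_eq_zero (ZMod 4) 4

lemma dicDouble_natCast_self (hn : Odd n) : dicDouble n n = 2 := by
  obtain ⟨m, rfl⟩ := hn
  rw [dicDouble_natCast]
  push_cast
  linear_combination (m : ZMod 4) * CharP.ofNat_eq_zero (ZMod 4) 4

lemma dicProj_a [NeZero n] (i : ZMod (2 * n)) :
    dicProj n (QuaternionGroup.a i) = dicDouble n i := by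
  simp only [dicProj, dicDouble_eq_two_mul_val, Nat.cast_mul, Nat.cast_ofNat]

lemma dicProj_xa [NeZero n] (i : ZMod (2 * n)) :
    dicProj n (QuaternionGroup.xa i) = dicDouble n i + 1 := by
  simp only [dicProj, dicDouble_eq_two_mul_val, Nat.cast_add, Nat.cast_mul, Nat.cast_ofNat,
    Nat.cast_one]

lemma dicProj_one : dicProj n 1 = 0 := by
  simp only [QuaternionGroup.one_def, dicProj, ZMod.val_zero, mul_zero, Nat.cast_zero]

lemma dicProj_mul (hn : Odd n) (x y : QuaternionGroup n) :
    dicProj n (x * y) = dicProj n x + dicProj n y := by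
  have : NeZero n := ⟨hn.pos.ne'⟩
  rcases x with i | i <;> rcases y with j | j
  · rw [QuaternionGroup.a_mul_a]
    simp only [dicProj_a, map_add]
  · rw [QuaternionGroup.a_mul_xa]
    simp only [dicProj_a, dicProj_xa, sub_eq_add_neg, map_add, dicDouble_neg]
    ring
  · rw [QuaternionGroup.xa_mul_a]
    simp only [dicProj_a, dicProj_xa, map_add]
    ring
  · rw [QuaternionGroup.xa_mul_xa]
    simp only [dicProj_a, dicProj_xa, sub_eq_add_neg, map_add, dicDouble_neg,
      dicDouble_natCast_self hn]
    ring

lemma dicProj_a_one_pow_self (hn : Odd n) :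
    dicProj n ((QuaternionGroup.a 1 : QuaternionGroup n) ^ n) = 2 := by
  have : NeZero n := ⟨hn.pos.ne'⟩
  rw [QuaternionGroup.a_one_pow, dicProj_a, dicDouble_natCast_self hn]

end Projection

lemma commute_a_one_pow_self {n : ℕ} (h : QuaternionGroup n) :
    Commute ((QuaternionGroup.a 1 : QuaternionGroup n) ^ n) h := by
  have neg_self : -(n : ZMod (2 * n)) = n := by
    rw [neg_eq_iff_add_eq_zero, ← two_mul]
    exact_mod_cast ZMod.natCast_self (2 * n)
  rw [QuaternionGroup.a_one_pow, commute_iff_eq]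
  rcases h with i | i
  · rw [QuaternionGroup.a_mul_a, QuaternionGroup.a_mul_a, add_comm]
  · rw [QuaternionGroup.a_mul_xa, QuaternionGroup.xa_mul_a, sub_eq_add_neg, neg_self]

lemma val_add_val_eq_val_add_carry {n : ℕ} [NeZero n] (s t : ZMod n) :
    s.val + t.val = (s + t).val + n * (if n ≤ s.val + t.val then 1 else 0) := by
  split_ifs with carry
  · rw [mul_one, ZMod.val_add_val_of_le carry]
  · rw [mul_zero, add_zero, ZMod.val_add_of_lt (not_le.mp carry)]

section CyclicDatum

variable {k : Type*} [Field k]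

lemma omegaDic_right_comm (ζ : kˣ) (a b c : ZMod 4) : omegaDic ζ a b c = omegaDic ζ a c b := by
  simp only [omegaDic, add_comm]

lemma chiDic_zero (q : kˣ) : chiDic q 0 = 1 := by
  simp only [chiDic, ZMod.val_zero, mul_zero, pow_zero]

lemma chiDic_mul_chiDic (q : kˣ) (s t : ZMod 4) :
    chiDic q s * chiDic q t = (omegaDic (q ^ 4) 2 s t : k) * chiDic q (s + t) := by
  have val_two : (2 : ZMod 4).val = 2 := rfl
  simp only [chiDic, omegaDic, val_two, Units.val_pow_eq_pow_val, ← pow_mul, ← pow_add]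
  congr 1
  linarith [val_add_val_eq_val_add_carry s t]

lemma chiDic_add (q : kˣ) (s t : ZMod 4) :
    chiDic q (s + t) =
      (omegaDic (q ^ 4) s t 2 : k)⁻¹ * chiDic q t * (omegaDic (q ^ 4) s 2 t : k) *
        chiDic q s * (omegaDic (q ^ 4) 2 s t : k)⁻¹ := by
  rw [omegaDic_right_comm _ s 2 t]
  have omega_ne_zero := (omegaDic (q ^ 4) s t 2).ne_zero
  have omega_two_ne_zero := (omegaDic (q ^ 4) 2 s t).ne_zero
  field_simp
  linear_combination -chiDic_mul_chiDic q s t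

end CyclicDatum

theorem quasiYD_datum_dicyclic_general {k : Type*} [Field k] (n : ℕ) (hn : Odd n) (q : kˣ) :
    (∀ x y : QuaternionGroup n, dicProj n (x * y) = dicProj n x + dicProj n y) ∧
    (dicProj n ((QuaternionGroup.a 1 : QuaternionGroup n) ^ n) = 2 ∧
      ∀ h : QuaternionGroup n,
        (QuaternionGroup.a 1 : QuaternionGroup n) ^ n * h =
          h * (QuaternionGroup.a 1 : QuaternionGroup n) ^ n) ∧
    (chiDic q (dicProj n 1) = 1 ∧
      ∀ h l : QuaternionGroup n,
        chiDic q (dicProj n (h * l)) =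
          ((omegaDic (q ^ 4) (dicProj n h) (dicProj n l) 2 : k))⁻¹ *
            chiDic q (dicProj n l) *
            (omegaDic (q ^ 4) (dicProj n h) 2 (dicProj n l) : k) *
            chiDic q (dicProj n h) *
            ((omegaDic (q ^ 4) 2 (dicProj n h) (dicProj n l) : k))⁻¹) := by
  refine ⟨dicProj_mul hn, ⟨dicProj_a_one_pow_self hn, commute_a_one_pow_self⟩, ?_, fun h l => ?_⟩
  · rw [dicProj_one, chiDic_zero]
  · rw [dicProj_mul hn, chiDic_add]

/-- Example 6.5 (ex: quasi YD for dicyclic group): a quasi-Yetter–Drinfeld datum on the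
group algebra of the dicyclic group `Dic_p` of order `4p`, `p` an odd prime, pulled
back along `π : Dic_p → C₄` from the datum `((kC₄, ω_ζ), c², χ)`. -/
theorem quasiYD_datum_dicyclic {k : Type*} [Field k]
    (p : ℕ) (hp : p.Prime) (hodd : Odd p)
    (q : kˣ) (hq : IsPrimitiveRoot q 16) :
    (∀ x y : QuaternionGroup p, dicProj p (x * y) = dicProj p x + dicProj p y) ∧
    (dicProj p ((QuaternionGroup.a 1 : QuaternionGroup p) ^ p) = 2 ∧
      ∀ h : QuaternionGroup p,
        (QuaternionGroup.a 1 : QuaternionGroup p) ^ p * h =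
          h * (QuaternionGroup.a 1 : QuaternionGroup p) ^ p) ∧
    (chiDic q (dicProj p 1) = 1 ∧
      ∀ h l : QuaternionGroup p,
        chiDic q (dicProj p (h * l)) =
          ((omegaDic (q ^ 4) (dicProj p h) (dicProj p l) 2 : k))⁻¹ *
            chiDic q (dicProj p l) *
            (omegaDic (q ^ 4) (dicProj p h) 2 (dicProj p l) : k) *
            chiDic q (dicProj p h) *
            ((omegaDic (q ^ 4) 2 (dicProj p h) (dicProj p l) : k))⁻¹) :=
  quasiYD_datum_dicyclic_general p hodd q
end

section
/- Let k be a field, n ≥ 2, q ∈ k a primitive n²-th root of unity, and ζ := q^n. Define ω : (ZMod n²)³ → kˣ by ω(a,b,c) := ζ^{(val(a) mod n) · [(val(b) mod n) + (val(c) mod n) ≥ n]}, where val(x) ∈ {0, …, n²−1} is the canonical representative of x ∈ ZMod n², and define χ' : ZMod n² → k by χ'(t) := q^{val(t) mod n}. Then: (a) χ'(0) = 1 and the quasi-YD product formula holds for (ω, 1, χ'): for all a, b ∈ ZMod n², χ'(a+b) = ω(a,b,1)⁻¹ · χ'(b) · ω(a,1,b) · χ'(a) · ω(1,a,b)⁻¹;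 but (b) χ'(n·1) = 1 while χ'(1)^n = ζ ≠ 1; in particular χ'(n·t) ≠ χ'(t)^n in general. -/
/-- The pullback cocycle `ω = ω_ζ ∘ φ^{⊗3}` on `ZMod n²`, where
`φ : ZMod n² → ZMod n` is the canonical projection and `ζ = q^n`. -/
def omegaPullback {k : Type*} [Field k] (n : ℕ) (q : kˣ) (a b c : ZMod (n ^ 2)) : kˣ :=
  (q ^ n) ^ ((a.val % n) * (if n ≤ b.val % n + c.val % n then 1 else 0))

/-- The function `χ' = χ ∘ φ` on `ZMod n²`, `χ'(t) = q^{val(t) mod n}`. -/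
def chiPullback {k : Type*} [Field k] (n : ℕ) (q : kˣ) (t : ZMod (n ^ 2)) : k :=
  (q : k) ^ (t.val % n)

/-! The map `t ↦ q ^ (t mod n)` fails to be multiplicative only through carries: when the residues
of `a` and `b` add up to at least `n`, a factor `q ^ n = ζ` is lost, and `ω (1, a, b)` records
exactly this factor. Since `ω (a, b, 1) = ω (a, 1, b)`, the other two factors of the product formula
cancel. The power rule fails because the residue of `n · 1` is `0`, whereas `q ^ n ≠ 1`. -/

section QuasiYetterDrinfeld

variable {k : Type*} [Field k] {n : ℕ}

lemma zmod_val_add_mod_add_carry {m : ℕ} [NeZero m] (hnm : n ∣ m) (a b : ZMod m) :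
    (a + b).val % n + (if n ≤ a.val % n + b.val % n then n else 0) = a.val % n + b.val % n := by
  rw [ZMod.val_add, Nat.mod_mod_of_dvd _ hnm, Nat.add_mod_add_ite]

lemma zmod_val_natCast_mod_of_dvd {m : ℕ} (hnm : n ∣ m) (t : ℕ) :
    (t : ZMod m).val % n = t % n := by
  rw [ZMod.val_natCast, Nat.mod_mod_of_dvd _ hnm]

lemma chiPullback_natCast (q : kˣ) (t : ℕ) :
    chiPullback n q (t : ZMod (n ^ 2)) = (q : k) ^ (t % n) := by
  rw [chiPullback, zmod_val_natCast_mod_of_dvd (dvd_pow_self n two_ne_zero)]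

lemma chiPullback_zero (q : kˣ) : chiPullback n q 0 = 1 := by
  simpa using chiPullback_natCast (n := n) q 0

lemma chiPullback_one (hn : 1 < n) (q : kˣ) : chiPullback n q 1 = q := by
  simpa [Nat.mod_eq_of_lt hn] using chiPullback_natCast (n := n) q 1

lemma chiPullback_natCast_self (q : kˣ) : chiPullback n q (n : ZMod (n ^ 2)) = 1 := by
  rw [chiPullback_natCast, Nat.mod_self, pow_zero]

lemma omegaPullback_right_comm (q : kˣ) (a b c : ZMod (n ^ 2)) :
    omegaPullback n q a b c = omegaPullback n q a c b := by
  rw [omegaPullback, omegaPullback, add_comm]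

lemma omegaPullback_one_left (hn : 1 < n) (q : kˣ) (a b : ZMod (n ^ 2)) :
    omegaPullback n q 1 a b = q ^ (if n ≤ a.val % n + b.val % n then n else 0) := by
  have val_one_mod : (1 : ZMod (n ^ 2)).val % n = 1 := by
    simpa [Nat.mod_eq_of_lt hn] using
      zmod_val_natCast_mod_of_dvd (dvd_pow_self n two_ne_zero) 1
  rw [omegaPullback, val_one_mod, one_mul, ← pow_mul, mul_ite, mul_one, mul_zero]

lemma chiPullback_add_mul_omegaPullback (hn : 1 < n) (q : kˣ) (a b : ZMod (n ^ 2)) :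
    chiPullback n q (a + b) * (omegaPullback n q 1 a b : k) =
      chiPullback n q a * chiPullback n q b := by
  have : NeZero (n ^ 2) := ⟨by positivity⟩
  rw [omegaPullback_one_left hn, Units.val_pow_eq_pow_val, chiPullback, chiPullback, chiPullback,
    ← pow_add, ← pow_add, zmod_val_add_mod_add_carry (dvd_pow_self n two_ne_zero)]

lemma chiPullback_add (hn : 1 < n) (q : kˣ) (a b : ZMod (n ^ 2)) :
    chiPullback n q (a + b) =
      ((omegaPullback n q a b 1 : k))⁻¹ * chiPullback n q b *
        (omegaPullback n q a 1 b : k) * chiPullback n q a *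
        ((omegaPullback n q 1 a b : k))⁻¹ := by
  rw [eq_mul_inv_iff_mul_eq₀ (Units.ne_zero _), chiPullback_add_mul_omegaPullback hn,
    omegaPullback_right_comm q a 1 b]
  field_simp

theorem pullback_quasiYD_datum_chi_power_fails_general (hn : 2 ≤ n) (q : kˣ) :
    (chiPullback n q 0 = 1 ∧
      ∀ a b : ZMod (n ^ 2),
        chiPullback n q (a + b) =
          ((omegaPullback n q a b 1 : k))⁻¹ * chiPullback n q b *
            (omegaPullback n q a 1 b : k) * chiPullback n q a *
            ((omegaPullback n q 1 a b : k))⁻¹) ∧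
    (chiPullback n q ((n : ZMod (n ^ 2)) * 1) = 1 ∧
      chiPullback n q 1 ^ n = ((q ^ n : kˣ) : k)) := by
  refine ⟨⟨chiPullback_zero q, chiPullback_add hn q⟩, ?_, ?_⟩
  · rw [mul_one, chiPullback_natCast_self]
  · rw [chiPullback_one hn, Units.val_pow_eq_pow_val]

end QuasiYetterDrinfeld

/-- Example 6.6 (ex: phi): `((kC_{n²}, ω_ζ ∘ φ^{⊗3}), 𝔠, χ ∘ φ)` satisfies the quasi-YD
product formula, yet `χ'(n·1) = 1` while `χ'(1)^n = ζ ≠ 1`; so `χ(c^t) = χ(c)^t`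
can fail for a quasi-YD datum whose reassociator is not of the form `ω_{ζ^w}`. -/
theorem pullback_quasiYD_datum_chi_power_fails {k : Type*} [Field k]
    (n : ℕ) (hn : 2 ≤ n) (q : kˣ) (hq : IsPrimitiveRoot q (n ^ 2)) :
    (chiPullback n q 0 = 1 ∧
      ∀ a b : ZMod (n ^ 2),
        chiPullback n q (a + b) =
          ((omegaPullback n q a b 1 : k))⁻¹ * chiPullback n q b *
            (omegaPullback n q a 1 b : k) * chiPullback n q a *
            ((omegaPullback n q 1 a b : k))⁻¹) ∧
    (chiPullback n q ((n : ZMod (n ^ 2)) * 1) = 1 ∧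
      chiPullback n q 1 ^ n = ((q ^ n : kˣ) : k) ∧ (q ^ n : kˣ) ≠ 1) := by
  obtain ⟨datum, chi_n, chi_one_pow⟩ := pullback_quasiYD_datum_chi_power_fails_general hn q
  exact ⟨datum, chi_n, chi_one_pow,
    hq.pow_ne_one_of_pos_of_lt (by lia) (lt_self_pow₀ hn one_lt_two)⟩
end

section
/- Let k be a field, p a prime, q ∈ k a primitive p²-th root of unity, and ζ := q^p. Let z, w, j, k', i be natural numbers with 1 ≤ z ≤ p−1, 1 ≤ w ≤ p−1, 0 ≤ j ≤ p−1, 0 ≤ k' ≤ p−1, and 1 ≤ i ≤ p−1. If ζ^{j·z} · q^{i·z²} = ζ^{k'·w} · q^{i·w²}, then either (z = w and j = k') or (z + w = p and p divides j + k' + 2·i). -/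
/-!
Both sides are powers of `q`, so equality says that `p² ∣ p (j z - k w) + i (z² - w²)`. Modulo `p`
this forces `z = ± w`. If `z = w` the difference is `p z (j - k)`, and if `z + w = p` it is
`p z (j + k + 2 i)` up to a multiple of `p²`; in both cases `p` and then `z` can be cancelled.
-/

section PrimitiveRoot

variable {M : Type*} [CommMonoid M] {q : M} {n : ℕ}

lemma pow_eq_pow_iff_modEq_of_isPrimitiveRoot (hq : IsPrimitiveRoot q n) (hn : n ≠ 0) {a b : ℕ} :
    q ^ a = q ^ b ↔ a ≡ b [MOD n] := by
  have hfin : IsOfFinOrder q := isOfFinOrder_iff_pow_eq_one.mpr ⟨n, hn.bot_lt, hq.pow_eq_one⟩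
  rw [hfin.pow_eq_pow_iff_modEq, ← hq.eq_orderOf]

lemma pow_pow_mul_pow_eq_iff_sq_dvd (hq : IsPrimitiveRoot q (n ^ 2)) (hn : n ≠ 0)
    {z w j k i : ℕ} :
    (q ^ n) ^ (j * z) * q ^ (i * z ^ 2) = (q ^ n) ^ (k * w) * q ^ (i * w ^ 2) ↔
      (n : ℤ) ^ 2 ∣ n * (j * z - k * w) + i * (z ^ 2 - w ^ 2) := by
  simp only [← pow_mul, ← pow_add]
  rw [pow_eq_pow_iff_modEq_of_isPrimitiveRoot hq (pow_ne_zero 2 hn), Nat.ModEq.comm,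
    Nat.modEq_iff_dvd]
  push_cast
  ring_nf

end PrimitiveRoot

section Divisibility

variable {R : Type*} [CommRing R]

lemma dvd_sub_or_dvd_add_of_sq_dvd {p i : R} (hp : Prime p) (hi : ¬ p ∣ i) {a z w : R}
    (h : p ^ 2 ∣ p * a + i * (z ^ 2 - w ^ 2)) : p ∣ z - w ∨ p ∣ z + w := by
  have hsq : p ∣ i * (z ^ 2 - w ^ 2) :=
    (dvd_add_right (dvd_mul_right p a)).mp ((dvd_pow_self p two_ne_zero).trans h)
  rw [sq_sub_sq, hp.dvd_mul, hp.dvd_mul] at hsq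
  exact (hsq.resolve_left hi).symm

variable [IsDomain R] {n z : R}

lemma sq_dvd_mul_mul_iff_of_isCoprime (hn : n ≠ 0) (hz : IsCoprime n z) {a : R} :
    n ^ 2 ∣ n * (a * z) ↔ n ∣ a := by
  rw [sq, mul_dvd_mul_iff_left hn]
  exact ⟨hz.dvd_of_dvd_mul_right, (·.mul_right z)⟩

lemma sq_dvd_iff_dvd_add_add_two_mul (hn : n ≠ 0) (hz : IsCoprime n z) {w : R} (hzw : z + w = n)
    {j k i : R} :
    n ^ 2 ∣ n * (j * z - k * w) + i * (z ^ 2 - w ^ 2) ↔ n ∣ j + k + 2 * i := by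
  have hsplit : n * (j * z - k * w) + i * (z ^ 2 - w ^ 2) =
      n * ((j + k + 2 * i) * z) - n ^ 2 * (k + i) := by
    obtain rfl : w = n - z := eq_sub_of_add_eq' hzw
    ring
  rw [hsplit, dvd_sub_left (dvd_mul_right _ _), sq_dvd_mul_mul_iff_of_isCoprime hn hz]

end Divisibility

lemma eq_or_add_eq_of_sq_dvd {p z w i : ℕ} (hp : p.Prime) (hz0 : z ≠ 0) (hz : z < p) (hw : w < p)
    (hi : ¬ p ∣ i) {a : ℤ} (h : (p : ℤ) ^ 2 ∣ p * a + i * (z ^ 2 - w ^ 2)) :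
    z = w ∨ z + w = p := by
  refine (dvd_sub_or_dvd_add_of_sq_dvd (Nat.prime_iff_prime_int.mp hp)
    (by exact_mod_cast hi) h).imp (fun hsub => ?_) (fun hadd => ?_)
  · exact ((Nat.modEq_iff_dvd.mpr hsub).eq_of_lt_of_lt hw hz).symm
  · exact Nat.eq_of_dvd_of_lt_two_mul (by lia) (by exact_mod_cast hadd) (by lia)

theorem bosonization_dichotomy_general {M : Type*} [CommMonoid M] {p : ℕ} (hp : p.Prime) {q : M}
    (hq : IsPrimitiveRoot q (p ^ 2)) {z w j k i : ℕ} (hz0 : z ≠ 0) (hz : z < p) (hw : w < p)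
    (hi : ¬ p ∣ i) :
    (q ^ p) ^ (j * z) * q ^ (i * z ^ 2) = (q ^ p) ^ (k * w) * q ^ (i * w ^ 2) ↔
      (z = w ∧ j ≡ k [MOD p]) ∨ (z + w = p ∧ p ∣ j + k + 2 * i) := by
  have hp0 : (p : ℤ) ≠ 0 := mod_cast hp.ne_zero
  have hpz : IsCoprime (p : ℤ) z :=
    Nat.isCoprime_iff_coprime.mpr (Nat.coprime_of_lt_prime hz0 hz hp)
  have hdiag : (p : ℤ) ^ 2 ∣ p * (j * z - k * z) + i * (z ^ 2 - z ^ 2) ↔ j ≡ k [MOD p] := by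
    rw [sub_self, mul_zero, add_zero, ← sub_mul, sq_dvd_mul_mul_iff_of_isCoprime hp0 hpz,
      Nat.ModEq.comm, Nat.modEq_iff_dvd]
  have hanti (hzw : z + w = p) :
      (p : ℤ) ^ 2 ∣ p * (j * z - k * w) + i * (z ^ 2 - w ^ 2) ↔ p ∣ j + k + 2 * i := by
    rw [sq_dvd_iff_dvd_add_add_two_mul hp0 hpz (mod_cast hzw)]
    norm_cast
  rw [pow_pow_mul_pow_eq_iff_sq_dvd hq hp.ne_zero]
  constructor
  · intro h
    obtain rfl | hzw := eq_or_add_eq_of_sq_dvd hp hz0 hz hw hi h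
    · exact .inl ⟨rfl, hdiag.mp h⟩
    · exact .inr ⟨hzw, (hanti hzw).mp h⟩
  · rintro (⟨rfl, hjk⟩ | ⟨hzw, hjk⟩)
    · exact hdiag.mpr hjk
    · exact (hanti hzw).mpr hjk

/-- The arithmetic dichotomy of Example 6.3 (ex: p(p-1) sq boson): if
`ζ^{j·z}·q^{i·z²} = ζ^{k'·w}·q^{i·w²}` with `ζ = q^p` and `q` a primitive `p²`-th root
of unity, then either `z = w` and `j = k'`, or `z + w = p` and `p ∣ j + k' + 2i`. -/
theorem bosonization_dichotomy {k : Type*} [Field k]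
    (p : ℕ) (hp : p.Prime) (q : k) (hq : IsPrimitiveRoot q (p ^ 2))
    (z w j k' i : ℕ)
    (hz1 : 1 ≤ z) (hz2 : z ≤ p - 1) (hw1 : 1 ≤ w) (hw2 : w ≤ p - 1)
    (hj : j ≤ p - 1) (hk : k' ≤ p - 1) (hi1 : 1 ≤ i) (hi2 : i ≤ p - 1)
    (heq : (q ^ p) ^ (j * z) * q ^ (i * z ^ 2) = (q ^ p) ^ (k' * w) * q ^ (i * w ^ 2)) :
    (z = w ∧ j = k') ∨ (z + w = p ∧ p ∣ j + k' + 2 * i) := by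
  have hlt {x : ℕ} (hx : x ≤ p - 1) : x < p := Nat.lt_of_le_pred hp.pos hx
  exact ((bosonization_dichotomy_general hp hq (Nat.ne_of_gt hz1) (hlt hz2) (hlt hw2)
    (Nat.not_dvd_of_pos_of_lt hi1 (hlt hi2))).mp heq).imp_left
      (And.imp_right fun hjk => hjk.eq_of_lt_of_lt (hlt hj) (hlt hk))
end
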